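/- Assume the element setup. Then every tuple (f_p, f_q, y_p, y*, e_p, e_q, u*, u_p) in the generalized Stokes–Dirac structure D_h satisfies the power conservation identity ⟨e_p|f_p⟩_p + ⟨e_q|f_q⟩_q + y*(u_p) + u*(y_p) = 0. -/

import Mathlib

/-- The generalized Stokes-Dirac structure on a single element: the set of tuples
`((f_p, f_q, y_p, y*), (e_p, e_q, u*, u_p))` satisfying the defining relations. -/
def diracSet (p q : ℤ) {E_p F_p E_q F_q B_p B_q : Type*}
    [AddCommGroup E_p] [Module ℝ E_p] [AddCommGroup F_p] [Module ℝ F_p]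
    [AddCommGroup E_q] [Module ℝ E_q] [AddCommGroup F_q] [Module ℝ F_q]
    [AddCommGroup B_p] [Module ℝ B_p] [AddCommGroup B_q] [Module ℝ B_q]
    (dpq : E_q →ₗ[ℝ] F_p) (dqp : E_p →ₗ[ℝ] F_q)
    (trp : E_p →ₗ[ℝ] B_p) (trq : E_q →ₗ[ℝ] B_q)
    (Q : B_q →ₗ[ℝ] Module.Dual ℝ B_p)
    (T_p : Module.Dual ℝ B_p →ₗ[ℝ] F_p) (T_q : B_p →ₗ[ℝ] F_q) :
    Set ((F_p × F_q × B_p × Module.Dual ℝ B_p) ×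
         (E_p × E_q × Module.Dual ℝ B_p × B_p)) :=
  {x | x.1.1 = ((-1 : ℝ) ^ (p * q + 1)) • dpq x.2.2.1
        + (((-1 : ℝ) ^ (p * q + 1 + q)) * (1 / 2)) • T_p (Q (trq x.2.2.1))
        + ((-1 : ℝ) ^ (p * q + 1 + q)) • T_p x.2.2.2.1
    ∧ x.1.2.1 = dqp x.2.1 + (((-1 : ℝ) ^ p) * (1 / 2)) • T_q (trp x.2.1)
        + ((-1 : ℝ) ^ p) • T_q x.2.2.2.2
    ∧ x.1.2.2.2 = -(((-1 : ℝ) ^ p) • Q (trq x.2.2.1))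
    ∧ x.1.2.2.1 = -(((-1 : ℝ) ^ p) • trp x.2.1)}

/-- Power conservation: every tuple in the generalized Stokes-Dirac structure satisfies
`⟨e_p|f_p⟩_p + ⟨e_q|f_q⟩_q + y*(u_p) + u*(y_p) = 0`. -/
theorem generalized_stokes_dirac_power_conservation
    (n p q : ℤ) (hpq : p + q = n + 1)
    {E_p F_p E_q F_q B_p B_q : Type*}
    [AddCommGroup E_p] [Module ℝ E_p] [FiniteDimensional ℝ E_p]
    [AddCommGroup F_p] [Module ℝ F_p] [FiniteDimensional ℝ F_p]
    [AddCommGroup E_q] [Module ℝ E_q] [FiniteDimensional ℝ E_q]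
    [AddCommGroup F_q] [Module ℝ F_q] [FiniteDimensional ℝ F_q]
    [AddCommGroup B_p] [Module ℝ B_p] [FiniteDimensional ℝ B_p]
    [AddCommGroup B_q] [Module ℝ B_q] [FiniteDimensional ℝ B_q]
    (pairP : E_p →ₗ[ℝ] F_p →ₗ[ℝ] ℝ)
    (hP₁ : ∀ e : E_p, (∀ f : F_p, pairP e f = 0) → e = 0)
    (hP₂ : ∀ f : F_p, (∀ e : E_p, pairP e f = 0) → f = 0)
    (pairQ : E_q →ₗ[ℝ] F_q →ₗ[ℝ] ℝ)
    (hQ₁ : ∀ e : E_q, (∀ f : F_q, pairQ e f = 0) → e = 0)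
    (hQ₂ : ∀ f : F_q, (∀ e : E_q, pairQ e f = 0) → f = 0)
    (dpq : E_q →ₗ[ℝ] F_p) (dqp : E_p →ₗ[ℝ] F_q)
    (trp : E_p →ₗ[ℝ] B_p) (trq : E_q →ₗ[ℝ] B_q)
    (Q : B_q →ₗ[ℝ] Module.Dual ℝ B_p)
    (hibp : ∀ (w : E_q) (v : E_p),
      (-1 : ℝ) ^ (p * (n - p)) * pairP v (dpq w)
        = (-1 : ℝ) ^ p * pairQ w (dqp v) + Q (trq w) (trp v))
    (T_p : Module.Dual ℝ B_p →ₗ[ℝ] F_p)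
    (hTp : ∀ (v : E_p) (l : Module.Dual ℝ B_p),
      pairP v (T_p l) = (-1 : ℝ) ^ ((p - 1) * (q - 1)) * l (trp v))
    (T_q : B_p →ₗ[ℝ] F_q)
    (hTq : ∀ (w : E_q) (u : B_p), pairQ w (T_q u) = Q (trq w) u)
    (f_p : F_p) (f_q : F_q) (y_p : B_p) (ystar : Module.Dual ℝ B_p)
    (e_p : E_p) (e_q : E_q) (ustar : Module.Dual ℝ B_p) (u_p : B_p)
    (hmem : ((f_p, f_q, y_p, ystar), (e_p, e_q, ustar, u_p)) ∈
      diracSet p q dpq dqp trp trq Q T_p T_q) :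
    pairP e_p f_p + pairQ e_q f_q + ystar u_p + ustar y_p = 0 := by
  obtain ⟨hfp, hfq, hystar, hyp⟩ := hmem
  dsimp only at hfp hfq hystar hyp
  obtain rfl : n = p + q - 1 := by omega
  have hsq (k : ℤ) : (-1 : ℝ) ^ k * (-1 : ℝ) ^ k = 1 := by
    rw [← mul_zpow]; norm_num
  have hne : (-1 : ℝ) ≠ 0 := by norm_num
  -- The sign of the reversed pairing times the sign of `d_pq` is `-(-1) ^ p`.
  have hd : (-1 : ℝ) ^ (p * q + 1) = -(-1 : ℝ) ^ p * (-1 : ℝ) ^ (p * (p + q - 1 - p)) := by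
    rw [show p * q + 1 = p + p * (p + q - 1 - p) + 1 by ring, zpow_add₀ hne, zpow_add₀ hne]
    simp
  have hT : (-1 : ℝ) ^ (p * q + 1 + q) = (-1 : ℝ) ^ p * (-1 : ℝ) ^ ((p - 1) * (q - 1)) := by
    rw [show p * q + 1 + q = p + (p - 1) * (q - 1) + (q + q) by ring, zpow_add₀ hne,
      zpow_add₀ hne, zpow_add₀ hne q q, hsq q, mul_one]
  rw [hd, hT] at hfp
  subst hfp hfq hystar hyp
  simp only [map_add, map_smul, map_neg, smul_eq_mul, LinearMap.neg_apply, LinearMap.smul_apply,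
    hTp, hTq]
  linear_combination -(-1 : ℝ) ^ p * hibp e_q e_p - pairQ e_q (dqp e_p) * hsq p +
    (-1 : ℝ) ^ p * (1 / 2 * Q (trq e_q) (trp e_p) + ustar (trp e_p)) * hsq ((p - 1) * (q - 1))
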